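/- Every closed subgroup H₀ of a countable product ∏ₙ ℝ^{kₙ} of finite-dimensional Euclidean groups which is not locally compact is topologically isomorphic to ℤ^k ⊕ ℝ^l, where k, l ∈ ℕ ∪ {ℕ} and at least one of k, l equals ℕ. -/

import Mathlib

open Filter Topology

/-- A closed subgroup of a proper normed space that contains no line has no small nonzero
elements. -/
theorem exists_pos_forall_norm_lt_imp_eq_zero {E : Type*} [NormedAddCommGroup E]
    [NormedSpace ℝ E] [ProperSpace E] (Γ : AddSubgroup E) (hΓ : IsClosed (Γ : Set E))
    (hline : ∀ v : E, (∀ t : ℝ, t • v ∈ Γ) → v = 0) :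
    ∃ ε > 0, ∀ v ∈ Γ, ‖v‖ < ε → v = 0 := by
  by_contra! hcon
  choose v hvΓ hvlt hv0 using fun n : ℕ => hcon (1 / ((n : ℝ) + 1)) (by positivity)
  have hnorm : Tendsto (fun n => ‖v n‖) atTop (𝓝 0) :=
    squeeze_zero (fun _ => norm_nonneg _) (fun n => (hvlt n).le)
      tendsto_one_div_add_atTop_nhds_zero_nat
  have hpos : ∀ n, 0 < ‖v n‖ := fun n => norm_pos_iff.2 (hv0 n)
  obtain ⟨u, hu, φ, hφ, hlim⟩ := (isCompact_sphere (0 : E) 1).tendsto_subseq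
    (x := fun n => ‖v n‖⁻¹ • v n) (fun n => by
      simp [norm_smul, inv_mul_cancel₀ (hpos n).ne'])
  have hu0 : u ≠ 0 := by
    rintro rfl
    simp at hu
  refine hu0 (hline u fun t => ?_)
  have hdiff : Tendsto (fun n => ⌊t / ‖v (φ n)‖⌋ • v (φ n) - t • (‖v (φ n)‖⁻¹ • v (φ n)))
      atTop (𝓝 0) := by
    refine squeeze_zero_norm (fun n => ?_) (hnorm.comp hφ.tendsto_atTop)
    rw [← Int.cast_smul_eq_zsmul ℝ, smul_smul, ← sub_smul, norm_smul, ← div_eq_mul_inv]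
    have h1 := Int.floor_le (t / ‖v (φ n)‖)
    have h2 := Int.lt_floor_add_one (t / ‖v (φ n)‖)
    refine mul_le_of_le_one_left (norm_nonneg _) ?_
    rw [Real.norm_eq_abs, abs_le]
    constructor <;> linarith
  have hsum := hdiff.add (hlim.const_smul t)
  simp only [Function.comp_def, sub_add_cancel, zero_add] at hsum
  exact hΓ.mem_of_tendsto hsum (Eventually.of_forall fun n => Γ.zsmul_mem (hvΓ _) _)

/-- A closed subgroup of a proper normed space that contains no line meets bounded sets in finite
sets. -/
theorem finite_inter_of_isClosed_of_no_line {E : Type*} [NormedAddCommGroup E]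
    [NormedSpace ℝ E] [ProperSpace E] (Γ : AddSubgroup E) (hΓ : IsClosed (Γ : Set E))
    (hline : ∀ v : E, (∀ t : ℝ, t • v ∈ Γ) → v = 0) {K : Set E} (hK : Bornology.IsBounded K) :
    (K ∩ Γ).Finite := by
  obtain ⟨ε, hε, h⟩ := exists_pos_forall_norm_lt_imp_eq_zero Γ hΓ hline
  have : DiscreteTopology Γ := by
    refine discreteTopology_of_isOpen_singleton_zero (Metric.isOpen_iff.2 ?_)
    rintro x rfl
    refine ⟨ε, hε, fun y hy => Subtype.ext (h y y.2 ?_)⟩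
    simpa using hy
  exact Metric.finite_isBounded_inter_isClosed DiscreteTopology.isDiscrete hK hΓ

/-- The preimages of `A` under linear maps from finite-dimensional spaces are closed. -/
def IsFinitelyClosed {V : Type*} [AddCommGroup V] [Module ℝ V] (A : AddSubgroup V) : Prop :=
  ∀ (s : Type) [Fintype s] (φ : (s → ℝ) →ₗ[ℝ] V), IsClosed (φ ⁻¹' (A : Set V))

/-- The largest real subspace contained in an additive subgroup. -/
def AddSubgroup.lineSubspace {V : Type*} [AddCommGroup V] [Module ℝ V] (A : AddSubgroup V) :
    Submodule ℝ V where
  carrier := {v | ∀ t : ℝ, t • v ∈ A}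
  zero_mem' t := by simp
  add_mem' ha hb t := by
    rw [smul_add]
    exact A.add_mem (ha t) (hb t)
  smul_mem' c v hv t := by
    rw [smul_smul]
    exact hv _

theorem AddSubgroup.lineSubspace_le {V : Type*} [AddCommGroup V] [Module ℝ V]
    {A : AddSubgroup V} {v : V} (hv : v ∈ A.lineSubspace) : v ∈ A := by
  simpa using hv 1

/-- Let `v` be a linearly independent family in `A ⊓ M`, where `M` meets the lines of `A`
trivially, and let `g` be a coordinate map for `v`. Among the elements of `A ⊓ M` whose
coordinates vanish outside a finite set `S`, the values of the `i`-th coordinate form a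
cyclic group. -/
theorem exists_generator_coordinate {V : Type*} [AddCommGroup V] [Module ℝ V]
    {A : AddSubgroup V} (hA : IsFinitelyClosed A) {M : Submodule ℝ V}
    (hM : Disjoint A.lineSubspace M) {ι : Type} {v : ι → V}
    (hvA : ∀ i, v i ∈ A) (hvM : ∀ i, v i ∈ M) {g : V →ₗ[ℝ] ι →₀ ℝ}
    (hg : ∀ c, g (Finsupp.linearCombination ℝ v c) = c)
    (hspan : ∀ a ∈ A, a ∈ M → Finsupp.linearCombination ℝ v (g a) = a)
    (S : Finset ι) {i : ι} (hi : i ∈ S) :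
    ∃ w, w ∈ A ∧ w ∈ M ∧ (∀ j ∉ S, g w j = 0) ∧ g w i ≠ 0 ∧
      ∀ a ∈ A, a ∈ M → (∀ j ∉ S, g a j = 0) → ∃ m : ℤ, g a i = m * g w i := by
  classical
  set φ : (S → ℝ) →ₗ[ℝ] V := Fintype.linearCombination ℝ (fun j : S => v j) with hφ
  have hφM : ∀ c, φ c ∈ M := fun c =>
    M.sum_mem fun j _ => M.smul_mem _ (hvM _)
  have hgv : ∀ j, g (v j) = Finsupp.single j 1 := fun j => by
    simpa using hg (Finsupp.single j 1)
  have hgφ : ∀ c (j : S), g (φ c) j = c j := fun c j => by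
    simp only [hφ, Fintype.linearCombination_apply, map_sum, map_smul, hgv,
      Finsupp.finsetSum_apply, Finsupp.smul_apply, Finsupp.single_apply, smul_eq_mul]
    rw [Finset.sum_eq_single j]
    · simp
    · intro k _ hk
      simp [Subtype.coe_injective.ne hk]
    · simp
  have hφg : ∀ a ∈ A, a ∈ M → (∀ j ∉ S, g a j = 0) → φ (fun j => g a j) = a := by
    intro a ha haM hz
    conv_rhs => rw [← hspan a ha haM]
    rw [Finsupp.linearCombination_apply,
      Finsupp.sum_of_support_subset (s := S) _ (fun j hj => by
        by_contra h
        exact Finsupp.mem_support_iff.1 hj (hz j h)) _ (by simp)]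
    rw [hφ, Fintype.linearCombination_apply]
    exact Finset.sum_coe_sort S (fun j => g a j • v j)
  have hfin := finite_inter_of_isClosed_of_no_line (A.comap φ.toAddMonoidHom) (hA S φ)
    (fun c hc => by
      have h0 : φ c = 0 := by
        refine (Submodule.disjoint_def.1 hM) _ (fun t => ?_) (hφM c)
        rw [← map_smul]
        exact hc t
      ext j
      rw [← hgφ c j, h0]
      simp) (isCompact_Icc (a := (0 : S → ℝ)) (b := 1)).isBounded
  let T : Set ℝ := ((fun c : S → ℝ => c ⟨i, hi⟩) ''
    (Set.Icc 0 1 ∩ (A.comap φ.toAddMonoidHom : Set (S → ℝ)))) ∩ Set.Ioi 0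
  have hT : T.Finite := (hfin.image _).inter_of_left _
  have h1T : (1 : ℝ) ∈ T := by
    refine ⟨⟨Pi.single ⟨i, hi⟩ 1, ⟨⟨Pi.single_nonneg.2 zero_le_one, ?_⟩, ?_⟩, by simp⟩, by simp⟩
    · intro j
      by_cases h : j = ⟨i, hi⟩
      · subst h
        simp
      · simp [h]
    · change φ _ ∈ A
      rw [hφ, Fintype.linearCombination_apply_single, one_smul]
      exact hvA i
  obtain ⟨r, hrT, hrmin⟩ := Set.exists_min_image T id hT ⟨1, h1T⟩
  let B : AddSubgroup V :=
    { carrier := {a | a ∈ A ∧ a ∈ M ∧ ∀ j ∉ S, g a j = 0}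
      zero_mem' := ⟨A.zero_mem, M.zero_mem, by simp⟩
      add_mem' := fun ha hb => ⟨A.add_mem ha.1 hb.1, M.add_mem ha.2.1 hb.2.1, fun j hj => by
        simp [ha.2.2 j hj, hb.2.2 j hj]⟩
      neg_mem' := fun ha => ⟨A.neg_mem ha.1, M.neg_mem ha.2.1, fun j hj => by
        simp [ha.2.2 j hj]⟩ }
  have hviB : v i ∈ B := ⟨hvA i, hvM i, fun j hj => by
    rw [hgv, Finsupp.single_apply, if_neg]
    rintro rfl
    exact hj hi⟩
  let lam : V →+ ℝ := ((Finsupp.lapply i : (ι →₀ ℝ) →ₗ[ℝ] ℝ) ∘ₗ g).toAddMonoidHom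
  have hlam : ∀ a, lam a = g a i := fun _ => rfl
  have hdisj : Disjoint ((B.map lam : AddSubgroup ℝ) : Set ℝ) (Set.Ioo 0 r) := by
    rw [Set.disjoint_left]
    rintro _ ⟨a, ha, rfl⟩ ⟨hpos, hlt⟩
    rw [hlam] at hpos hlt
    have hlt1 : g a i < 1 := hlt.trans_le (hrmin 1 h1T)
    have hmem : (fun j : S => Int.fract (g a j)) ∈
        Set.Icc 0 1 ∩ (A.comap φ.toAddMonoidHom : Set (S → ℝ)) := by
      refine ⟨⟨fun j => Int.fract_nonneg _, fun j => (Int.fract_lt_one _).le⟩, ?_⟩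
      change φ _ ∈ A
      have : (fun j : S => Int.fract (g a j)) =
          (fun j : S => g a j) - fun j : S => ((⌊g a j⌋ : ℤ) : ℝ) := rfl
      rw [this, map_sub, hφg a ha.1 ha.2.1 ha.2.2]
      refine A.sub_mem ha.1 ?_
      rw [hφ, Fintype.linearCombination_apply]
      refine A.sum_mem fun j _ => ?_
      rw [Int.cast_smul_eq_zsmul]
      exact A.zsmul_mem (hvA _) _
    have hfr : Int.fract (g a i) = g a i := Int.fract_eq_self.2 ⟨hpos.le, hlt1⟩
    exact absurd (hrmin (g a i) ⟨⟨_, hmem, hfr⟩, hpos⟩) (not_le.2 hlt)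
  obtain ⟨b, hb⟩ := AddSubgroup.cyclic_of_isolated_zero hrT.2 hdisj
  have hbmem : b ∈ B.map lam := hb ▸ AddSubgroup.subset_closure rfl
  obtain ⟨w, hw, rfl⟩ := hbmem
  have hmul : ∀ a ∈ B, ∃ m : ℤ, g a i = m * g w i := fun a ha => by
    have : lam a ∈ B.map lam := ⟨a, ha, rfl⟩
    rw [hb, AddSubgroup.mem_closure_singleton] at this
    obtain ⟨m, hm⟩ := this
    exact ⟨m, by rw [← hlam, ← hm, zsmul_eq_mul, hlam]⟩
  refine ⟨w, hw.1, hw.2.1, hw.2.2, fun h0 => ?_, fun a ha haM hz => hmul a ⟨ha, haM, hz⟩⟩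
  obtain ⟨m, hm⟩ := hmul _ hviB
  rw [h0, hgv] at hm
  simp at hm

/-- A finitely closed subgroup of a space of countable dimension is, modulo its lines, freely
generated by a family that is linearly independent over `ℝ`. -/
theorem exists_linearIndependent_generators {V : Type} [AddCommGroup V] [Module ℝ V]
    (hV : Module.rank ℝ V ≤ Cardinal.aleph0) {A : AddSubgroup V} (hA : IsFinitelyClosed A)
    {M : Submodule ℝ V} (hM : Disjoint A.lineSubspace M) :
    ∃ (ι : Type) (w : ι → V), LinearIndependent ℝ w ∧ (∀ i, w i ∈ A) ∧ (∀ i, w i ∈ M) ∧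
      ∀ a ∈ A, a ∈ M → a ∈ AddSubgroup.closure (Set.range w) := by
  obtain ⟨ι, hιA, hιspan, hv⟩ := exists_linearIndependent ℝ {a : V | a ∈ A ∧ a ∈ M}
  set v : ι → V := Subtype.val
  have hcount : Countable ι :=
    Cardinal.mk_le_aleph0_iff.1 (hv.cardinal_le_rank.trans hV)
  obtain ⟨f, hf⟩ := hcount.exists_injective_nat
  obtain ⟨g, hg'⟩ := LinearMap.exists_leftInverse_of_injective
    (Finsupp.linearCombination ℝ v) (LinearMap.ker_eq_bot.2 hv)
  have hg : ∀ c, g (Finsupp.linearCombination ℝ v c) = c := fun c =>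
    LinearMap.congr_fun hg' c
  have hspan : ∀ a ∈ A, a ∈ M → Finsupp.linearCombination ℝ v (g a) = a := by
    intro a ha haM
    have : a ∈ Submodule.span ℝ (Set.range v) := by
      rw [Subtype.range_coe, hιspan]
      exact Submodule.subset_span ⟨ha, haM⟩
    obtain ⟨c, rfl⟩ := Finsupp.mem_span_range_iff_exists_finsupp.1 this
    change Finsupp.linearCombination ℝ v (g (Finsupp.linearCombination ℝ v c)) = _
    rw [hg]
    rfl
  have hfinite : ∀ n, {j | f j ≤ n}.Finite := fun n =>
    (Set.finite_Iic n).preimage hf.injOn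
  choose w hwA hwM hw0 hwi hwgen using fun i =>
    exists_generator_coordinate hA hM (fun j => (hιA j.2).1) (fun j => (hιA j.2).2) hg hspan
      (hfinite (f i)).toFinset (i := i) (by simp)
  simp only [Set.Finite.mem_toFinset, Set.mem_ofPred_eq, not_le] at hw0 hwgen
  refine ⟨ι, w, ?_, hwA, hwM, ?_⟩
  · rw [linearIndependent_iff]
    intro c hc
    by_contra hne
    obtain ⟨i, hi, hmax⟩ := Finset.exists_max_image c.support f
      (Finsupp.support_nonempty_iff.2 hne)
    have h0 : g (Finsupp.linearCombination ℝ w c) i = 0 := by simp [hc]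
    rw [Finsupp.linearCombination_apply, Finsupp.sum, map_sum, Finsupp.finsetSum_apply,
      Finset.sum_eq_single i] at h0
    · simp only [map_smul, Finsupp.smul_apply, smul_eq_mul, mul_eq_zero] at h0
      exact h0.elim (Finsupp.mem_support_iff.1 hi) (hwi i)
    · intro j hj hji
      have : f j < f i := lt_of_le_of_ne (hmax j hj) (hf.ne hji)
      simp [hw0 j i this]
    · exact fun h => absurd hi h
  · have key : ∀ n, ∀ a ∈ A, a ∈ M → (∀ j, n ≤ f j → g a j = 0) →
        a ∈ AddSubgroup.closure (Set.range w) := by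
      intro n
      induction n with
      | zero =>
        intro a ha haM hz
        have : g a = 0 := Finsupp.ext fun j => hz j (Nat.zero_le _)
        rw [← hspan a ha haM, this, map_zero]
        exact zero_mem _
      | succ n ih =>
        intro a ha haM hz
        by_cases hn : ∃ i, f i = n
        · obtain ⟨i, rfl⟩ := hn
          obtain ⟨m, hm⟩ := hwgen i a ha haM (fun j hj => hz j hj)
          have hsub := ih (a - m • w i) (A.sub_mem ha (A.zsmul_mem (hwA i) m))
            (M.sub_mem haM (zsmul_mem (hwM i) m)) (fun j hj => by
              rw [map_sub, map_zsmul, Finsupp.sub_apply, Finsupp.smul_apply, zsmul_eq_mul]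
              rcases hj.eq_or_lt with h | h
              · rw [← hf h, hm, sub_self]
              · rw [hz j h, hw0 i j h, mul_zero, sub_zero])
          have := AddSubgroup.add_mem _ hsub
            (AddSubgroup.zsmul_mem _
            (AddSubgroup.subset_closure (Set.mem_range_self i)) m)
          rwa [sub_add_cancel] at this
        · refine ih a ha haM fun j hj => ?_
          rcases hj.eq_or_lt with h | h
          · exact absurd ⟨j, h.symm⟩ hn
          · exact hz j h
    intro a ha haM
    refine key ((g a).support.sup f + 1) a ha haM fun j hj => ?_
    by_contra h
    have := Finset.le_sup (f := f) (Finsupp.mem_support_iff.2 h)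
    omega

/-- Any linearly independent family extends to a basis. -/
theorem LinearIndependent.exists_basis_sum_elim {V ι : Type} [AddCommGroup V] [Module ℝ V]
    {v : ι → V} (hv : LinearIndependent ℝ v) :
    ∃ (κ : Type) (b : Module.Basis (ι ⊕ κ) ℝ V), ∀ i, b (Sum.inl i) = v i := by
  obtain ⟨N, hN⟩ := Submodule.exists_isCompl (Submodule.span ℝ (Set.range v))
  let c := Module.Basis.ofVectorSpace ℝ N
  have hc : Submodule.span ℝ (Set.range fun j => (c j : V)) = N := by
    have := congrArg (Submodule.map N.subtype) c.span_eq
    rwa [Submodule.map_span, ← Set.range_comp, Submodule.map_top, Submodule.range_subtype] at this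
  refine ⟨_, Module.Basis.mk (v := Sum.elim v fun j => (c j : V)) (hv.sum_type
    (c.linearIndependent.map' N.subtype N.ker_subtype) ?_) ?_, ?_⟩
  · change Disjoint _ (Submodule.span ℝ (Set.range fun j => (c j : V)))
    rw [hc]
    exact hN.disjoint
  · rw [Set.Sum.elim_range, Submodule.span_union, hc, hN.sup_eq_top]
  · simp

/-- **Structure of finitely closed subgroups**: in a suitable basis of a real vector space of
countable dimension, a finitely closed subgroup consists of the vectors with arbitrary
coordinates along `τ`, integral coordinates along `ι` and zero coordinates along `κ`. -/
theorem IsFinitelyClosed.exists_basis {V : Type} [AddCommGroup V] [Module ℝ V]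
    (hV : Module.rank ℝ V ≤ Cardinal.aleph0) {A : AddSubgroup V} (hA : IsFinitelyClosed A) :
    ∃ (τ ι κ : Type) (b : Module.Basis ((τ ⊕ ι) ⊕ κ) ℝ V), ∀ a, a ∈ A ↔
      (∀ i, ∃ m : ℤ, b.repr a (Sum.inl (Sum.inr i)) = m) ∧ ∀ k, b.repr a (Sum.inr k) = 0 := by
  obtain ⟨M, hM⟩ := Submodule.exists_isCompl A.lineSubspace
  obtain ⟨ι, w, hw, hwA, hwM, hgen⟩ := exists_linearIndependent_generators hV hA hM.disjoint
  let l := Module.Basis.ofVectorSpace ℝ A.lineSubspace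
  have hl : Submodule.span ℝ (Set.range fun j => (l j : V)) = A.lineSubspace := by
    have := congrArg (Submodule.map A.lineSubspace.subtype) l.span_eq
    rwa [Submodule.map_span, ← Set.range_comp, Submodule.map_top, Submodule.range_subtype] at this
  have hlw : LinearIndependent ℝ (Sum.elim (fun j => (l j : V)) w) := by
    refine (l.linearIndependent.map' A.lineSubspace.subtype
      A.lineSubspace.ker_subtype).sum_type hw ?_
    change Disjoint (Submodule.span ℝ (Set.range fun j => (l j : V))) _
    rw [hl]
    refine hM.disjoint.mono_right (Submodule.span_le.2 ?_)
    rintro _ ⟨i, rfl⟩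
    exact hwM i
  obtain ⟨κ, b, hb⟩ := hlw.exists_basis_sum_elim
  have hbl : ∀ j, b (Sum.inl (Sum.inl j)) = l j := fun j => by simp [hb]
  have hbw : ∀ i, b (Sum.inl (Sum.inr i)) = w i := fun i => by simp [hb]
  refine ⟨_, ι, κ, b, fun a => ⟨fun ha => ?_, fun ⟨hi, hk⟩ => ?_⟩⟩
  · let C : AddSubgroup V :=
      { carrier := {a | (∀ i, ∃ m : ℤ, b.repr a (Sum.inl (Sum.inr i)) = m) ∧
          ∀ k, b.repr a (Sum.inr k) = 0}
        zero_mem' := ⟨fun i => ⟨0, by simp⟩, by simp⟩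
        add_mem' := fun {x y} hx hy => ⟨fun i => by
          obtain ⟨m, hm⟩ := hx.1 i
          obtain ⟨n, hn⟩ := hy.1 i
          exact ⟨m + n, by simp [hm, hn]⟩, fun k => by simp [hx.2 k, hy.2 k]⟩
        neg_mem' := fun {x} hx => ⟨fun i => by
          obtain ⟨m, hm⟩ := hx.1 i
          exact ⟨-m, by simp [hm]⟩, fun k => by simp [hx.2 k]⟩ }
    have hLC : ∀ x ∈ A.lineSubspace, x ∈ C := by
      intro x hx
      have hz : (∀ i, b.repr x (Sum.inl (Sum.inr i)) = 0) ∧ ∀ k, b.repr x (Sum.inr k) = 0 := by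
        rw [← hl] at hx
        induction hx using Submodule.span_induction with
        | mem x hx =>
          obtain ⟨j, rfl⟩ := hx
          simp [← hbl]
        | zero => simp
        | add x y _ _ hx hy => exact ⟨by simp [hx.1, hy.1], by simp [hx.2, hy.2]⟩
        | smul c x _ hx => exact ⟨by simp [hx.1], by simp [hx.2]⟩
      exact ⟨fun i => ⟨0, by simp [hz.1 i]⟩, hz.2⟩
    have hwC : AddSubgroup.closure (Set.range w) ≤ C := by
      rw [AddSubgroup.closure_le]
      rintro _ ⟨i, rfl⟩
      refine ⟨fun j => ?_, fun k => by simp [← hbw]⟩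
      by_cases h : i = j
      · exact ⟨1, by simp [← hbw, h]⟩
      · exact ⟨0, by simp [← hbw, h]⟩
    obtain ⟨x, hx, y, hy, rfl⟩ := Submodule.mem_sup.1
      (hM.sup_eq_top ▸ Submodule.mem_top : a ∈ A.lineSubspace ⊔ M)
    have hyA : y ∈ A := by
      simpa using A.sub_mem ha (AddSubgroup.lineSubspace_le hx)
    exact C.add_mem (hLC x hx) (hwC (hgen y hyA hy))
  · rw [← b.linearCombination_repr a, Finsupp.linearCombination_apply]
    refine A.sum_mem fun s _ => ?_
    rcases s with (j | i) | k
    · simp only [hbl]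
      exact (l j).2 _
    · obtain ⟨m, hm⟩ := hi i
      simp only [hbw, hm, Int.cast_smul_eq_zsmul]
      exact A.zsmul_mem (hwA i) m
    · simp [hk k]

/-- A point outside a closed subgroup of `ℝˢ`, with `s` finite, is separated from it by a linear
functional with integral values on the subgroup. -/
theorem exists_linearMap_int_on_closed_subgroup {s : Type} [Fintype s] (C : AddSubgroup (s → ℝ))
    (hC : IsClosed (C : Set (s → ℝ))) {y : s → ℝ} (hy : y ∉ C) :
    ∃ f : (s → ℝ) →ₗ[ℝ] ℝ, (∀ c ∈ C, ∃ m : ℤ, f c = m) ∧ ¬ ∃ m : ℤ, f y = m := by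
  have hfin : IsFinitelyClosed C := fun _ _ φ =>
    hC.preimage φ.continuous_of_finiteDimensional
  obtain ⟨τ, ι, κ, b, hb⟩ := hfin.exists_basis (Module.rank_lt_aleph0 ℝ _).le
  rw [hb, not_and_or, not_forall, not_forall] at hy
  rcases hy with ⟨i, hi⟩ | ⟨k, hk⟩
  · exact ⟨b.coord (Sum.inl (Sum.inr i)), fun c hc => ((hb c).1 hc).1 i, hi⟩
  · refine ⟨(2 * b.repr y (Sum.inr k))⁻¹ • b.coord (Sum.inr k),
      fun c hc => ⟨0, by simp [((hb c).1 hc).2 k]⟩, ?_⟩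
    rintro ⟨m, hm⟩
    rw [LinearMap.smul_apply, Module.Basis.coord_apply, smul_eq_mul, mul_inv, mul_assoc,
      inv_mul_cancel₀ hk, mul_one, inv_eq_one_div, div_eq_iff two_ne_zero] at hm
    have : (1 : ℤ) = m * 2 := by exact_mod_cast hm
    omega

theorem continuous_linearCombination_left {σ : Type} (a : σ →₀ ℝ) :
    Continuous fun x : σ → ℝ => Finsupp.linearCombination ℝ x a := by
  simp only [Finsupp.linearCombination_apply, Finsupp.sum]
  fun_prop

theorem linearCombination_add_left {σ : Type} (x y : σ → ℝ) (a : σ →₀ ℝ) :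
    Finsupp.linearCombination ℝ (x + y) a =
      Finsupp.linearCombination ℝ x a + Finsupp.linearCombination ℝ y a := by
  simp [Finsupp.linearCombination_apply, mul_add, Finsupp.sum_add]

/-- A point outside a closed subgroup of `ℝ^σ` is separated from it by a finitely supported
functional with integral values on the subgroup. -/
theorem exists_finsupp_int_on_closed_subgroup {σ : Type} (H : AddSubgroup (σ → ℝ))
    (hH : IsClosed (H : Set (σ → ℝ))) {x : σ → ℝ} (hx : x ∉ H) :
    ∃ a : σ →₀ ℝ, (∀ h ∈ H, ∃ m : ℤ, Finsupp.linearCombination ℝ h a = m) ∧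
      ¬ ∃ m : ℤ, Finsupp.linearCombination ℝ x a = m := by
  classical
  obtain ⟨I, u, hu, hsub⟩ := isOpen_pi_iff.1 hH.isOpen_compl x hx
  let R : (σ → ℝ) →ₗ[ℝ] (I → ℝ) := LinearMap.funLeft ℝ ℝ Subtype.val
  let C : AddSubgroup (I → ℝ) := (H.map R.toAddMonoidHom).topologicalClosure
  have hxC : R x ∉ C := by
    intro hmem
    obtain ⟨_, hy, h, hh, rfl⟩ := mem_closure_iff.1 hmem
      (Set.univ.pi fun i : I => u i)
      (isOpen_set_pi Set.finite_univ fun i _ => (hu i i.2).1) (fun i _ => (hu i i.2).2)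
    exact hsub (fun i hi => hy ⟨i, hi⟩ trivial) hh
  obtain ⟨f, hf, hfx⟩ := exists_linearMap_int_on_closed_subgroup C
    (AddSubgroup.isClosed_topologicalClosure _) hxC
  let a : σ →₀ ℝ := ∑ i : I, Finsupp.single i.1 (f (Pi.single i 1))
  have ha : ∀ h, Finsupp.linearCombination ℝ h a = f (R h) := fun h => by
    conv_rhs => rw [f.pi_apply_eq_sum_univ (R h)]
    simp only [a, map_sum, Finsupp.linearCombination_single, smul_eq_mul]
    refine Finset.sum_congr rfl fun i _ => ?_
    rw [mul_comm]
    congr 3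
    ext j
    simp [Pi.single_apply, eq_comm]
  refine ⟨a, fun h hh => ?_, by rwa [ha]⟩
  rw [ha]
  exact hf _ (AddSubgroup.le_topologicalClosure _ ⟨h, hh, rfl⟩)

/-- A closed subgroup of a countable power of the line is topologically isomorphic to a product
of countably many copies of `ℤ` and `ℝ`. -/
theorem exists_homeomorph_prod_of_isClosed {σ : Type} [Countable σ] (H : AddSubgroup (σ → ℝ))
    (hH : IsClosed (H : Set (σ → ℝ))) :
    ∃ (ι κ : Type), Countable ι ∧ Countable κ ∧ ∃ e : H ≃ₜ ((ι → ℤ) × (κ → ℝ)),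
      ∀ x y : H, e (x + y) = e x + e y := by
  let A : AddSubgroup (σ →₀ ℝ) :=
    { carrier := {a | ∀ h ∈ H, ∃ m : ℤ, Finsupp.linearCombination ℝ h a = m}
      zero_mem' := fun h _ => ⟨0, by simp⟩
      add_mem' := fun {a b} ha hb h hh => by
        obtain ⟨m, hm⟩ := ha h hh
        obtain ⟨n, hn⟩ := hb h hh
        exact ⟨m + n, by simp [hm, hn]⟩
      neg_mem' := fun {a} ha h hh => by
        obtain ⟨m, hm⟩ := ha h hh
        exact ⟨-m, by simp [hm]⟩ }
  have hA : IsFinitelyClosed A := fun s _ φ => by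
    have : φ ⁻¹' (A : Set (σ →₀ ℝ)) = ⋂ h ∈ H,
        (Finsupp.linearCombination ℝ h ∘ₗ φ) ⁻¹' Set.range ((↑) : ℤ → ℝ) := by
      ext c
      simp only [Set.mem_iInter]
      exact forall₂_congr fun h _ => exists_congr fun m => eq_comm
    rw [this]
    exact isClosed_biInter fun h _ => Int.isClosedEmbedding_coe_real.isClosed_range.preimage
      (LinearMap.continuous_of_finiteDimensional _)
  have hrank : Module.rank ℝ (σ →₀ ℝ) ≤ Cardinal.aleph0 := by
    simp
  obtain ⟨τ, ι, κ, b, hb⟩ := hA.exists_basis hrank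
  have hcount : Countable ((τ ⊕ ι) ⊕ κ) :=
    Cardinal.mk_le_aleph0_iff.1 (b.linearIndependent.cardinal_le_rank.trans hrank)
  have hκ : Countable κ := (Sum.inr_injective (α := τ ⊕ ι)).countable
  have hι : Countable ι :=
    ((Sum.inl_injective (β := κ)).comp (Sum.inr_injective (α := τ))).countable
  have hmem : ∀ x, x ∈ H ↔
      (∀ t, Finsupp.linearCombination ℝ x (b (Sum.inl (Sum.inl t))) = 0) ∧
        ∀ i, ∃ m : ℤ, Finsupp.linearCombination ℝ x (b (Sum.inl (Sum.inr i))) = m := by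
    refine fun x => ⟨fun hx => ⟨fun t => ?_, fun i => ?_⟩, fun ⟨ht, hi⟩ => ?_⟩
    · by_contra hne
      set r := Finsupp.linearCombination ℝ x (b (Sum.inl (Sum.inl t)))
      obtain ⟨m, hm⟩ := (hb ((2 * r)⁻¹ • b (Sum.inl (Sum.inl t)))).2
        ⟨fun i => ⟨0, by simp⟩, fun k => by simp⟩ x hx
      rw [map_smul, smul_eq_mul, mul_inv, mul_assoc, inv_mul_cancel₀ hne, mul_one,
        inv_eq_one_div, div_eq_iff two_ne_zero] at hm
      have : (1 : ℤ) = m * 2 := by exact_mod_cast hm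
      omega
    · refine (hb _).2 ⟨fun j => ?_, fun k => by simp⟩ x hx
      by_cases h : i = j
      · exact ⟨1, by simp [h]⟩
      · exact ⟨0, by simp [h]⟩
    · by_contra hx
      obtain ⟨a, ha, hxa⟩ := exists_finsupp_int_on_closed_subgroup H hH hx
      obtain ⟨hai, hak⟩ := (hb a).1 ha
      refine hxa ((AddMonoidHom.mem_range (f := Int.castAddHom ℝ)).1 ?_ |>.imp fun m hm => hm.symm)
      rw [← b.linearCombination_repr a, Finsupp.linearCombination_apply ℝ (b.repr a),
        Finsupp.sum, map_sum]
      refine AddSubgroup.sum_mem _ fun j _ => ?_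
      rw [map_smul, smul_eq_mul]
      rcases j with (t | i) | k
      · rw [ht, mul_zero]
        exact zero_mem _
      · obtain ⟨m, hm⟩ := hai i
        obtain ⟨n, hn⟩ := hi i
        exact ⟨m * n, by simp [hm, hn]⟩
      · rw [hak, zero_mul]
        exact zero_mem _
  let G : (ι → ℤ) × (κ → ℝ) → (σ →₀ ℝ) →ₗ[ℝ] ℝ := fun p =>
    b.constr ℝ (Sum.elim (Sum.elim 0 fun i => (p.1 i : ℝ)) p.2)
  let inv : (ι → ℤ) × (κ → ℝ) → σ → ℝ := fun p s => G p (Finsupp.single s 1)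
  have hG : ∀ p, Finsupp.linearCombination ℝ (inv p) = G p := fun p =>
    Finsupp.lhom_ext' fun s => LinearMap.ext_ring (by simp [inv])
  have hinv : ∀ p, inv p ∈ H := fun p => by
    rw [hmem, hG]
    exact ⟨fun t => by simp [G], fun i => ⟨p.1 i, by simp [G]⟩⟩
  have hround : ∀ (x : H) i, ((round (Finsupp.linearCombination ℝ (x : σ → ℝ)
      (b (Sum.inl (Sum.inr i)))) : ℤ) : ℝ) =
        Finsupp.linearCombination ℝ (x : σ → ℝ) (b (Sum.inl (Sum.inr i))) := fun x i => by
    obtain ⟨m, hm⟩ := ((hmem x).1 x.2).2 i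
    rw [hm, round_intCast]
  refine ⟨ι, κ, hι, hκ,
    { toFun := fun x => (fun i => round (Finsupp.linearCombination ℝ (x : σ → ℝ)
        (b (Sum.inl (Sum.inr i)))), fun k => Finsupp.linearCombination ℝ (x : σ → ℝ)
        (b (Sum.inr k)))
      invFun := fun p => ⟨inv p, hinv p⟩
      left_inv := fun x => ?_
      right_inv := fun p => ?_
      continuous_toFun := ?_
      continuous_invFun := ?_ }, fun x y => ?_⟩
  · ext s
    have : G (fun i => round (Finsupp.linearCombination ℝ (x : σ → ℝ)
        (b (Sum.inl (Sum.inr i)))), fun k => Finsupp.linearCombination ℝ (x : σ → ℝ)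
        (b (Sum.inr k))) = Finsupp.linearCombination ℝ (x : σ → ℝ) := by
      refine b.ext fun j => ?_
      rcases j with (t | i) | k
      · simp [G, ((hmem x).1 x.2).1 t]
      · simp [G, hround]
      · simp [G]
    simp [inv, this]
  · ext i
    · simp [hG, G]
    · simp [hG, G]
  · refine .prodMk (continuous_pi fun i => ?_) (continuous_pi fun k =>
      (continuous_linearCombination_left _).comp continuous_subtype_val)
    rw [Int.isClosedEmbedding_coe_real.isInducing.continuous_iff]
    simp only [Function.comp_def, hround]
    exact (continuous_linearCombination_left _).comp continuous_subtype_val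
  · refine Continuous.subtype_mk (continuous_pi fun s => ?_) _
    simp only [inv, G, Module.Basis.constr_apply, Finsupp.sum]
    refine continuous_finsetSum _ fun j _ => Continuous.fun_const_smul ?_ _
    rcases j with (t | i) | k
    · exact continuous_const
    · exact Int.isClosedEmbedding_coe_real.continuous.comp
        ((continuous_apply i).comp continuous_fst)
    · exact (continuous_apply k).comp continuous_snd
  · refine Prod.ext (funext fun i => ?_) (funext fun k => linearCombination_add_left _ _ _)
    refine Int.cast_injective (α := ℝ) ((hround (x + y) i).trans ?_)
    rw [AddSubgroup.coe_add, linearCombination_add_left, ← hround x, ← hround y]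
    exact (Int.cast_add _ _).symm

/-- A closed non-locally compact subgroup `H` of a countable product `∏ₙ ℝ^{kₙ}` is
topologically isomorphic to `ℤ^k ⊕ ℝ^l` with `k, l ∈ ℕ ∪ {ℕ}`, at least one of them
infinite. -/
theorem stmt19 (k : ℕ → ℕ) (H : AddSubgroup (∀ n, Fin (k n) → ℝ))
    (hcl : IsClosed (H : Set (∀ n, Fin (k n) → ℝ)))
    (hnlc : ¬ LocallyCompactSpace H) :
    ∃ (ι κ : Type), Countable ι ∧ Countable κ ∧ (Infinite ι ∨ Infinite κ) ∧
      ∃ e : H ≃ₜ ((ι → ℤ) × (κ → ℝ)),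
        ∀ x y : H, e (x + y) = e x + e y := by
  let σ := Σ n, Fin (k n)
  let Φ : (∀ n, Fin (k n) → ℝ) ≃ₜ (σ → ℝ) :=
    { toFun := fun x s => x s.1 s.2
      invFun := fun y n j => y ⟨n, j⟩
      left_inv := fun _ => rfl
      right_inv := fun _ => rfl
      continuous_toFun := by fun_prop
      continuous_invFun := by fun_prop }
  let Ψ : (σ → ℝ) →+ (∀ n, Fin (k n) → ℝ) :=
    { toFun := Φ.symm
      map_zero' := rfl
      map_add' := fun _ _ => rfl }
  obtain ⟨ι, κ, hι, hκ, e, he⟩ :=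
    exists_homeomorph_prod_of_isClosed (H.comap Ψ) (hcl.preimage Φ.symm.continuous)
  let e' : H ≃ₜ H.comap Ψ := Φ.subtype fun _ => Iff.rfl
  refine ⟨ι, κ, hι, hκ, ?_, e'.trans e, fun x y => he (e' x) (e' y)⟩
  by_contra! hfin
  obtain ⟨_, _⟩ := hfin
  exact hnlc (e'.trans e).isClosedEmbedding.locallyCompactSpace
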